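/- For integers n ≥ 2 define I_n(x) = ∫₀^x sin^{n−1}(s) ds, W_{n−1} = ∫₀^{π/2} sin^{n−1}(s) ds, and T_n = (1/(2W_{n−1})) · ∫₀^π I_n(x)·I_n(π−x) / sin^{n−1}(x) dx (with the same formulas also defining T_1). Then T_2 = 1, T_3 = 3/4, and for every n ≥ 3, (n−1)·T_n = (n−3)·T_{n−2} + 1/(n−1) + 1/(n−2). -/

import Mathlib

open Real

noncomputable def sphereMean (n : ℕ) : ℝ :=
  (1 / (2 * ∫ s in (0:ℝ)..(π/2), Real.sin s ^ (n - 1))) *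
    ∫ x in (0:ℝ)..π,
      (∫ s in (0:ℝ)..x, Real.sin s ^ (n - 1)) *
        (∫ s in (0:ℝ)..(π - x), Real.sin s ^ (n - 1)) / Real.sin x ^ (n - 1)

open Filter Topology Set MeasureTheory in
theorem sm_deriv (k : ℕ) (x : ℝ) :
    HasDerivAt (fun x => ∫ s in (0:ℝ)..x, Real.sin s ^ k) (Real.sin x ^ k) x := by
  have hc : Continuous (fun s : ℝ => Real.sin s ^ k) := by fun_prop
  exact intervalIntegral.integral_hasDerivAt_right (hc.intervalIntegrable _ _)
    hc.aestronglyMeasurable.stronglyMeasurableAtFilter hc.continuousAt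

noncomputable def smJ (k : ℕ) (x : ℝ) : ℝ := ∫ s in (0:ℝ)..x, Real.sin s ^ k

theorem smJ_deriv (k : ℕ) (x : ℝ) : HasDerivAt (smJ k) (Real.sin x ^ k) x := sm_deriv k x

theorem smJ_cont (k : ℕ) : Continuous (smJ k) :=
  continuous_iff_continuousAt.2 fun x => (smJ_deriv k x).continuousAt

theorem smJ_red (k : ℕ) (x : ℝ) :
    ((k:ℝ) + 2) * smJ (k + 2) x = (k + 1) * smJ k x - Real.cos x * Real.sin x ^ (k + 1) := by
  unfold smJ
  rw [integral_sin_pow]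
  have : (k:ℝ) + 2 ≠ 0 := by positivity
  field_simp
  simp
  ring

theorem smJ_symm (k : ℕ) (x : ℝ) : smJ k (π - x) = smJ k π - smJ k x := by
  unfold smJ
  have hc : Continuous (fun s : ℝ => Real.sin s ^ k) := by fun_prop
  rw [intervalIntegral.integral_interval_sub_left (hc.intervalIntegrable _ _)
    (hc.intervalIntegrable _ _)]
  have := intervalIntegral.integral_comp_sub_left (a := 0) (b := π - x)
    (fun s : ℝ => Real.sin s ^ k) π
  simp only [Real.sin_pi_sub] at this
  rw [this]; simp

theorem smJ_half (k : ℕ) : smJ k π = 2 * smJ k (π / 2) := by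
  have := smJ_symm k (π / 2)
  rw [show π - π / 2 = π / 2 by ring] at this
  linarith

theorem smJ_zero (k : ℕ) : smJ k 0 = 0 := by simp [smJ]

theorem smJ_nonneg (k : ℕ) (x : ℝ) (h0 : 0 ≤ x) (h1 : x ≤ π) : 0 ≤ smJ k x := by
  apply intervalIntegral.integral_nonneg h0
  intro u hu
  exact pow_nonneg (Real.sin_nonneg_of_nonneg_of_le_pi hu.1 (hu.2.trans h1)) _

theorem smJ_pos (k : ℕ) : 0 < smJ k π := integral_sin_pow_pos k

theorem smJ_le (k : ℕ) (x : ℝ) (h0 : 0 ≤ x) (h1 : x ≤ π / 2) :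
    smJ k x ≤ x * Real.sin x ^ k := by
  have hc : Continuous (fun s : ℝ => Real.sin s ^ k) := by fun_prop
  have := intervalIntegral.integral_mono_on (μ := MeasureTheory.volume) h0
    (hc.intervalIntegrable 0 x)
    ((continuous_const (y := Real.sin x ^ k)).intervalIntegrable 0 x) (by
      intro s hs
      have hpi := Real.pi_pos
      apply pow_le_pow_left₀
      · exact Real.sin_nonneg_of_nonneg_of_le_pi hs.1 (by linarith [hs.2])
      · exact Real.sin_le_sin_of_le_of_le_pi_div_two (by linarith [hs.1]) h1 hs.2)
  simpa [smJ] using this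

theorem smJ_le_pi (k : ℕ) (x : ℝ) (h0 : 0 ≤ x) (h1 : x ≤ π) : smJ k x ≤ π := by
  have hc : Continuous (fun s : ℝ => Real.sin s ^ k) := by fun_prop
  have := intervalIntegral.integral_mono_on (μ := MeasureTheory.volume) h0
    (hc.intervalIntegrable 0 x)
    ((continuous_const (y := (1:ℝ))).intervalIntegrable 0 x) (by
      intro s hs
      apply pow_le_one₀
      · exact Real.sin_nonneg_of_nonneg_of_le_pi hs.1 (by linarith [hs.2])
      · exact Real.sin_le_one s)
  have h2 : smJ k x ≤ x := by simpa [smJ] using this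
  linarith

noncomputable def smF (k : ℕ) (x : ℝ) : ℝ := smJ k x * smJ k (π - x) / Real.sin x ^ k

theorem sphereMean_eq (k : ℕ) :
    sphereMean (k + 1) = 1 / smJ k π * ∫ x in (0:ℝ)..π, smF k x := by
  rw [smJ_half]
  rfl

theorem smF_bound (k : ℕ) (x : ℝ) (h0 : 0 < x) (h1 : x < π) : ‖smF k x‖ ≤ π * π := by
  have hs : 0 < Real.sin x ^ k := pow_pos (Real.sin_pos_of_pos_of_lt_pi h0 h1) _
  have hA := smJ_nonneg k x h0.le h1.le
  have hB := smJ_nonneg k (π - x) (by linarith) (by linarith)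
  have hA' := smJ_le_pi k x h0.le h1.le
  have hB' := smJ_le_pi k (π - x) (by linarith) (by linarith)
  have hpi := Real.pi_pos
  unfold smF
  rw [Real.norm_of_nonneg (by positivity), div_le_iff₀ hs]
  rcases le_total x (π / 2) with h | h
  · have := smJ_le k x h0.le h
    have h3 : smJ k x ≤ π * Real.sin x ^ k := this.trans (by gcongr)
    calc _ ≤ (π * Real.sin x ^ k) * π := by gcongr
      _ = _ := by ring
  · have := smJ_le k (π - x) (by linarith) (by linarith)
    rw [Real.sin_pi_sub] at this
    have h3 : smJ k (π - x) ≤ π * Real.sin x ^ k := this.trans (by gcongr; linarith)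
    calc _ ≤ π * (π * Real.sin x ^ k) := by gcongr
      _ = _ := by ring

open MeasureTheory in
theorem smF_int (k : ℕ) : IntervalIntegrable (smF k) volume 0 π := by
  rw [intervalIntegrable_iff_integrableOn_Ioo_of_le Real.pi_pos.le]
  have hm : Measurable (smF k) := by
    have h1 := (smJ_cont k).measurable
    have h2 : Measurable fun x => smJ k (π - x) :=
      ((smJ_cont k).comp (continuous_const.sub continuous_id)).measurable
    exact (h1.mul h2).div (by fun_prop)
  apply Measure.integrableOn_of_bounded (M := π * π) (by simp) hm.aestronglyMeasurable
  filter_upwards [ae_restrict_mem measurableSet_Ioo] with x hx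
  exact smF_bound k x hx.1 hx.2

noncomputable def smG (k : ℕ) (x : ℝ) : ℝ :=
  smJ k x * smJ k (π - x) * Real.cos x / Real.sin x ^ (k + 1)

open Filter Topology Set in
theorem smG_lim0 (k : ℕ) : Tendsto (smG k) (𝓝[>] 0) (𝓝 (smJ k π / (k + 1))) := by
  have hk : (k:ℝ) + 1 ≠ 0 := by positivity
  have hpi := Real.pi_pos
  have hev : ∀ᶠ x in 𝓝[>] (0:ℝ), x ∈ Ioo 0 (π / 2) := Ioo_mem_nhdsGT (by positivity)
  have hq : Tendsto (fun x => smJ (k + 2) x / Real.sin x ^ (k + 1)) (𝓝[>] 0) (𝓝 0) := by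
    have hu : Tendsto (fun x : ℝ => x * Real.sin x) (𝓝[>] 0) (𝓝 0) := by
      have : Continuous (fun x : ℝ => x * Real.sin x) := by fun_prop
      have := this.tendsto 0
      simp only [zero_mul] at this
      exact this.mono_left nhdsWithin_le_nhds
    refine tendsto_of_tendsto_of_tendsto_of_le_of_le' tendsto_const_nhds hu ?_ ?_
    · filter_upwards [hev] with x hx
      have hs := Real.sin_pos_of_pos_of_lt_pi hx.1 (by linarith [hx.2])
      have := smJ_nonneg (k + 2) x hx.1.le (by linarith [hx.2])
      positivity
    · filter_upwards [hev] with x hx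
      have hs := Real.sin_pos_of_pos_of_lt_pi hx.1 (by linarith [hx.2])
      rw [div_le_iff₀ (by positivity)]
      refine (smJ_le (k + 2) x hx.1.le hx.2.le).trans (le_of_eq ?_)
      ring
  have hcos : Tendsto Real.cos (𝓝[>] 0) (𝓝 1) := by
    have := Real.continuous_cos.tendsto 0
    rw [Real.cos_zero] at this
    exact this.mono_left nhdsWithin_le_nhds
  have hJ : Tendsto (fun x => smJ k (π - x)) (𝓝[>] 0) (𝓝 (smJ k π)) := by
    have : Continuous (fun x => smJ k (π - x)) :=
      (smJ_cont k).comp (continuous_const.sub continuous_id)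
    have := this.tendsto 0
    simp only [sub_zero] at this
    exact this.mono_left nhdsWithin_le_nhds
  have h := (((hcos.add (hq.const_mul ((k:ℝ) + 2))).div_const ((k:ℝ) + 1)).mul hJ).mul hcos
  have e : (1 + ((k:ℝ) + 2) * 0) / (k + 1) * smJ k π * 1 = smJ k π / (k + 1) := by ring
  rw [e] at h
  refine h.congr' ?_
  filter_upwards [hev] with x hx
  have hs := (Real.sin_pos_of_pos_of_lt_pi hx.1 (by linarith [hx.2])).ne'
  have hr := smJ_red k x
  unfold smG
  have hsp : Real.sin x ^ (k + 1) ≠ 0 := pow_ne_zero _ hs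
  have : (Real.cos x + ((k:ℝ) + 2) * (smJ (k + 2) x / Real.sin x ^ (k + 1))) / (k + 1)
      = smJ k x / Real.sin x ^ (k + 1) := by
    rw [← mul_div_assoc, hr]
    field_simp
    ring
  rw [this]; ring

open Filter Topology Set in
theorem smG_limpi (k : ℕ) : Tendsto (smG k) (𝓝[<] π) (𝓝 (-(smJ k π / (k + 1)))) := by
  have h1 : Tendsto (fun x => π - x) (𝓝[<] π) (𝓝[>] 0) := by
    apply tendsto_nhdsWithin_of_tendsto_nhds_of_eventually_within
    · have : Continuous (fun x : ℝ => π - x) := by fun_prop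
      have := this.tendsto π
      simp only [sub_self] at this
      exact this.mono_left nhdsWithin_le_nhds
    · filter_upwards [self_mem_nhdsWithin] with x hx
      simpa using hx
  refine ((smG_lim0 k).comp h1).neg.congr ?_
  intro x
  simp only [Function.comp, smG, Real.sin_pi_sub, Real.cos_pi_sub, sub_sub_cancel]
  ring

theorem smG_deriv (k : ℕ) (x : ℝ) (h0 : 0 < x) (h1 : x < π) :
    HasDerivAt (smG k) (k * smF k x
      - (((k:ℝ) + 2) ^ 2 * smF (k + 2) x + (Real.sin x ^ k - Real.sin x ^ (k + 2))) / (k + 1)) x := by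
  have hs := (Real.sin_pos_of_pos_of_lt_pi h0 h1).ne'
  have hk : (k:ℝ) + 1 ≠ 0 := by positivity
  have hB : HasDerivAt (fun x => smJ k (π - x)) (-Real.sin x ^ k) x := by
    have : (fun x => smJ k (π - x)) = fun x => smJ k π - smJ k x := by
      funext y; exact smJ_symm k y
    rw [this]
    exact (smJ_deriv k x).const_sub _
  have h := (((smJ_deriv k x).mul hB).mul (Real.hasDerivAt_cos x)).div
    ((Real.hasDerivAt_sin x).pow (k + 1)) (pow_ne_zero _ hs)
  refine h.congr_deriv ?_
  have e1 := smJ_red k x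
  have e2 := smJ_red k (π - x)
  rw [Real.sin_pi_sub, Real.cos_pi_sub] at e2
  have e3 : ((k:ℝ) + 2) ^ 2 * smF (k + 2) x =
    ((k + 1) * smJ k x - Real.cos x * Real.sin x ^ (k + 1)) *
    ((k + 1) * smJ k (π - x) + Real.cos x * Real.sin x ^ (k + 1)) / Real.sin x ^ (k + 2) := by
    rw [← e1, show (k + 1) * smJ k (π - x) + Real.cos x * Real.sin x ^ (k + 1)
      = ((k:ℝ) + 2) * smJ (k + 2) (π - x) by rw [e2]; ring]
    unfold smF; ring
  rw [e3]
  unfold smF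
  simp only [Pi.mul_apply, Pi.pow_apply]
  have hc : Real.cos x ^ 2 = 1 - Real.sin x ^ 2 := Real.cos_sq' x
  generalize smJ k x = A
  generalize smJ k (π - x) = B
  generalize Real.cos x = c at *
  generalize Real.sin x = s at *
  simp only [pow_succ, Nat.add_sub_cancel]
  have hsk : s ^ k ≠ 0 := pow_ne_zero _ hs
  push_cast
  generalize s ^ k = u at *
  field_simp
  linear_combination (-((k:ℝ) + 1) ^ 2 * A * B - u ^ 2 * s ^ 2) * hc

theorem sm_rec (k : ℕ) : ((k:ℝ) + 2) * sphereMean (k + 3)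
    = k * sphereMean (k + 1) + 1 / ((k:ℝ) + 2) + 1 / ((k:ℝ) + 1) := by
  have i0 := smF_int k
  have i2 := smF_int (k + 2)
  have c0 : IntervalIntegrable (fun x : ℝ => Real.sin x ^ k) MeasureTheory.volume 0 π :=
    Continuous.intervalIntegrable (by fun_prop) _ _
  have c2 : IntervalIntegrable (fun x : ℝ => Real.sin x ^ (k + 2)) MeasureTheory.volume 0 π :=
    Continuous.intervalIntegrable (by fun_prop) _ _
  have hi := (i0.const_mul (k:ℝ)).sub
    (((i2.const_mul (((k:ℝ) + 2) ^ 2)).add (c0.sub c2)).div_const ((k:ℝ) + 1))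
  have h := intervalIntegral.integral_eq_sub_of_hasDerivAt_of_tendsto Real.pi_pos
    (fun x hx => smG_deriv k x hx.1 hx.2) hi (smG_lim0 k) (smG_limpi k)
  rw [intervalIntegral.integral_sub (i0.const_mul (k:ℝ))
    (((i2.const_mul (((k:ℝ) + 2) ^ 2)).add (c0.sub c2)).div_const ((k:ℝ) + 1)),
    intervalIntegral.integral_div,
    intervalIntegral.integral_add (i2.const_mul (((k:ℝ) + 2) ^ 2)) (c0.sub c2),
    intervalIntegral.integral_sub c0 c2, intervalIntegral.integral_const_mul,
    intervalIntegral.integral_const_mul] at h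
  change _ - (_ + (smJ k π - smJ (k + 2) π)) / _ = _ at h
  have hw := smJ_red k π
  rw [Real.sin_pi, zero_pow (by omega), mul_zero, sub_zero] at hw
  have hp := smJ_pos k
  have hw' : smJ (k + 2) π = (k + 1) * smJ k π / (k + 2) := by
    field_simp; linarith
  rw [sphereMean_eq k, sphereMean_eq (k + 2)]
  rw [hw'] at h ⊢
  generalize (∫ x in (0:ℝ)..π, smF k x) = X at *
  generalize (∫ x in (0:ℝ)..π, smF (k + 2) x) = Y at *
  generalize smJ k π = a at *
  field_simp at h ⊢
  linarith

theorem sphere_mean_recursion :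
    sphereMean 2 = 1 ∧ sphereMean 3 = 3/4 ∧
      ∀ n : ℕ, 3 ≤ n →
        ((n:ℝ) - 1) * sphereMean n
          = ((n:ℝ) - 3) * sphereMean (n - 2) + 1 / ((n:ℝ) - 1) + 1 / ((n:ℝ) - 2) := by
  refine ⟨?_, ?_, ?_⟩
  · rw [sphereMean_eq 1]
    have hJ : ∀ x, smJ 1 x = 1 - Real.cos x := by
      intro x; simp [smJ]
    have : smF 1 = Real.sin := by
      funext x
      simp only [smF, hJ, Real.cos_pi_sub, pow_one]
      by_cases hs : Real.sin x = 0
      · simp [hs]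
      · field_simp
        have := Real.sin_sq x
        linarith
    rw [this, hJ]
    norm_num
  · have := sm_rec 0
    norm_num at this
    linarith
  · intro n hn
    obtain ⟨k, rfl⟩ := Nat.exists_eq_add_of_le' hn
    have := sm_rec k
    rw [show k + 3 - 2 = k + 1 by omega]
    push_cast
    rw [show (k:ℝ) + 3 - 1 = k + 2 by ring, show (k:ℝ) + 3 - 3 = k by ring,
      show (k:ℝ) + 3 - 2 = k + 1 by ring]
    exact this
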